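/- arXiv:1912.00591 — 2 statements merged into one kernel-verified Lean document; each statement's English description precedes it below -/
import Mathlib

section
/- Let S : ℝ³ → Matrix (Fin 3) (Fin 3) ℝ be a smooth matrix-valued field that is pointwise symmetric (S_{ab} = S_{ba}), trace-free (Σ_a S_{aa} = 0), and divergence-free (Σ_b ∂_b S_{ab} = 0 for every a). Then the symmetrized tensor curl applied twice gives minus the Laplacian: (curl (curl S))_{ab} = −ΔS_{ab} for all a, b, where Δ = Σ_c ∂_c². -/
/-- Partial derivative `∂_i` of a scalar field on `ℝ³`. -/
noncomputable def pd (i : Fin 3) (f : (Fin 3 → ℝ) → ℝ) (x : Fin 3 → ℝ) : ℝ :=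
  deriv (fun s => f (Function.update x i s)) (x i)

/-- Levi-Civita symbol on three indices. -/
noncomputable def eps (a b c : Fin 3) : ℝ :=
  (((b : ℕ) : ℝ) - ((a : ℕ) : ℝ)) * (((c : ℕ) : ℝ) - ((b : ℕ) : ℝ))
    * (((c : ℕ) : ℝ) - ((a : ℕ) : ℝ)) / 2

/-- Symmetrized tensor curl of a matrix-valued field on `ℝ³`:
`(curl S)_{ab} = ½ Σ_{c,d} ( ε_{acd} ∂_c S_{db} + ε_{bcd} ∂_c S_{da} )`. -/
noncomputable def curlT (S : (Fin 3 → ℝ) → Matrix (Fin 3) (Fin 3) ℝ)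
    (x : Fin 3 → ℝ) : Matrix (Fin 3) (Fin 3) ℝ :=
  Matrix.of fun a b =>
    (1 / 2) * ∑ c, ∑ d,
      (eps a c d * pd c (fun y => S y d b) x + eps b c d * pd c (fun y => S y d a) x)

/-!
The column-wise curl `R S = ε_{acd} ∂_c S_{db}` has antisymmetric part dual to
`(div S)_k - ∂_k tr S`, so on a transverse trace-free `S` it is already symmetric and equals
`curlT S`. Moreover `R S` is again transverse (`div curl = 0`) and trace-free (a contraction of `ε`
with the symmetric `S`). Hence `curlT (curlT S) = R (R S)`, and the vector identity
`curl curl = grad div - Δ` on each column concludes.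
-/

section PartialDerivative

variable {f : (Fin 3 → ℝ) → ℝ} {x : Fin 3 → ℝ}

theorem pd_eq_fderiv (i : Fin 3) (hf : DifferentiableAt ℝ f x) :
    pd i f x = fderiv ℝ f x (Pi.single i 1) := by
  have hf' : HasFDerivAt f (fderiv ℝ f x) (Function.update x i (x i)) := by
    simpa only [Function.update_eq_self] using hf.hasFDerivAt
  exact (hf'.comp_hasDerivAt (x i) (hasDerivAt_update x i (x i))).deriv

theorem pd_const (i : Fin 3) (k : ℝ) (x : Fin 3 → ℝ) : pd i (fun _ => k) x = 0 :=
  deriv_const _ k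

theorem pd_const_mul (i : Fin 3) (k : ℝ) (f : (Fin 3 → ℝ) → ℝ) (x : Fin 3 → ℝ) :
    pd i (fun y => k * f y) x = k * pd i f x :=
  deriv_const_mul_field k

theorem pd_sum {ι : Type*} {s : Finset ι} {F : ι → (Fin 3 → ℝ) → ℝ} (i : Fin 3)
    (hF : ∀ j ∈ s, DifferentiableAt ℝ (F j) x) :
    pd i (fun y => ∑ j ∈ s, F j y) x = ∑ j ∈ s, pd i (F j) x := by
  rw [pd_eq_fderiv i (DifferentiableAt.fun_sum hF), fderiv_fun_sum hF,
    _root_.sum_apply]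
  exact Finset.sum_congr rfl fun j hj => (pd_eq_fderiv i (hF j hj)).symm

theorem pd_eq_fderiv_fun (i : Fin 3) (hf : Differentiable ℝ f) :
    pd i f = fun y => fderiv ℝ f y (Pi.single i 1) :=
  funext fun y => pd_eq_fderiv i (hf y)

theorem contDiff_pd {n : WithTop ℕ∞} (i : Fin 3) (hf : ContDiff ℝ (n + 1) f) :
    ContDiff ℝ n (pd i f) := by
  rw [pd_eq_fderiv_fun i (hf.differentiable (by simp))]
  exact (hf.fderiv_right le_rfl).clm_apply contDiff_const

theorem differentiable_pd (i : Fin 3) (hf : ContDiff ℝ 2 f) : Differentiable ℝ (pd i f) :=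
  (contDiff_pd (n := 1) i (by simpa only [one_add_one_eq_two] using hf)).differentiable one_ne_zero

theorem pd_pd_eq_fderiv_fderiv (i j : Fin 3) (hf : ContDiff ℝ 2 f) (x : Fin 3 → ℝ) :
    pd i (pd j f) x = fderiv ℝ (fderiv ℝ f) x (Pi.single i 1) (Pi.single j 1) := by
  have hf' : DifferentiableAt ℝ (fderiv ℝ f) x :=
    (hf.fderiv_right (m := 1) (by simp only [one_add_one_eq_two, le_refl])).differentiable
      one_ne_zero x
  rw [pd_eq_fderiv i (differentiable_pd j hf x),
    pd_eq_fderiv_fun j (hf.differentiable two_ne_zero),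
    fderiv_clm_apply hf' (differentiableAt_const _)]
  simp

theorem pd_comm (i j : Fin 3) (hf : ContDiff ℝ 2 f) (x : Fin 3 → ℝ) :
    pd i (pd j f) x = pd j (pd i f) x := by
  have hsymm : IsSymmSndFDerivAt ℝ f x := hf.contDiffAt.isSymmSndFDerivAt (by simp)
  rw [pd_pd_eq_fderiv_fderiv i j hf, pd_pd_eq_fderiv_fderiv j i hf, hsymm.eq]

end PartialDerivative

section LeviCivita

theorem eps_swap (a b c : Fin 3) : eps a b c = -eps a c b := by
  unfold eps; ring

theorem eps_rotate (a b c : Fin 3) : eps a b c = eps b c a := by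
  unfold eps; ring

theorem sum_eps_mul_eps (a b c d : Fin 3) :
    ∑ k, eps a b k * eps k c d =
      (if c = a then 1 else 0) * (if d = b then 1 else 0)
        - (if d = a then 1 else 0) * (if c = b then 1 else 0) := by
  rw [Fin.sum_univ_three]
  fin_cases a <;> fin_cases b <;> fin_cases c <;> fin_cases d <;> norm_num [eps]

theorem sum_eps_mul_sum_eps_mul (a b : Fin 3) (M : Matrix (Fin 3) (Fin 3) ℝ) :
    ∑ k, eps a b k * ∑ c, ∑ d, eps k c d * M c d = M a b - M b a := by
  calc ∑ k, eps a b k * ∑ c, ∑ d, eps k c d * M c d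
      = ∑ c, ∑ d, (∑ k, eps a b k * eps k c d) * M c d := by
        simp only [Finset.mul_sum, Finset.sum_mul, mul_assoc]
        rw [Finset.sum_comm]
        exact Finset.sum_congr rfl fun c _ => Finset.sum_comm
    _ = M a b - M b a := by
        simp [sum_eps_mul_eps, sub_mul, Finset.sum_sub_distrib]

theorem isSymm_iff_sum_eps_mul_eq_zero {M : Matrix (Fin 3) (Fin 3) ℝ} :
    M.IsSymm ↔ ∀ k, ∑ a, ∑ b, eps k a b * M a b = 0 := by
  refine ⟨fun hM k => self_eq_neg.mp ?_, fun hM => Matrix.IsSymm.ext fun a b => ?_⟩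
  · calc ∑ a, ∑ b, eps k a b * M a b
        = ∑ b, ∑ a, eps k a b * M a b := Finset.sum_comm
      _ = ∑ b, ∑ a, -(eps k b a * M b a) := by
          refine Finset.sum_congr rfl fun b _ => Finset.sum_congr rfl fun a _ => ?_
          rw [eps_swap, hM.apply, neg_mul]
      _ = -∑ a, ∑ b, eps k a b * M a b := by simp only [Finset.sum_neg_distrib]
  · have h := sum_eps_mul_sum_eps_mul b a M
    simp only [hM, mul_zero, Finset.sum_const_zero] at h
    exact (sub_eq_zero.mp h.symm)

end LeviCivita

section VectorField

/-- Divergence `∂_b v_b` of a vector field on `ℝ³`. -/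
noncomputable def vecDiv (v : (Fin 3 → ℝ) → Fin 3 → ℝ) (x : Fin 3 → ℝ) : ℝ :=
  ∑ b, pd b (fun y => v y b) x

/-- Curl `ε_{acd} ∂_c v_d` of a vector field on `ℝ³`. -/
noncomputable def vecCurl (v : (Fin 3 → ℝ) → Fin 3 → ℝ) (x : Fin 3 → ℝ) (a : Fin 3) : ℝ :=
  ∑ c, ∑ d, eps a c d * pd c (fun y => v y d) x

variable {v : (Fin 3 → ℝ) → Fin 3 → ℝ}

theorem differentiable_vecCurl (hv : ∀ d, ContDiff ℝ 2 fun y => v y d) (a : Fin 3) :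
    Differentiable ℝ fun y => vecCurl v y a :=
  Differentiable.fun_sum fun c _ => Differentiable.fun_sum fun d _ =>
    (differentiable_pd c (hv d)).const_mul _

theorem pd_vecCurl (hv : ∀ d, ContDiff ℝ 2 fun y => v y d) (i a : Fin 3) (x : Fin 3 → ℝ) :
    pd i (fun y => vecCurl v y a) x =
      ∑ c, ∑ d, eps a c d * pd i (pd c fun y => v y d) x := by
  have hterm (c d : Fin 3) : Differentiable ℝ fun y => eps a c d * pd c (fun z => v z d) y :=
    (differentiable_pd c (hv d)).const_mul _
  unfold vecCurl
  rw [pd_sum i fun c _ => DifferentiableAt.fun_sum fun d _ => hterm c d x]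
  refine Finset.sum_congr rfl fun c _ => ?_
  rw [pd_sum i fun d _ => hterm c d x]
  simp only [pd_const_mul]

theorem pd_vecDiv (hv : ∀ d, ContDiff ℝ 2 fun y => v y d) (i : Fin 3) (x : Fin 3 → ℝ) :
    pd i (vecDiv v) x = ∑ b, pd i (pd b fun y => v y b) x :=
  pd_sum i fun b _ => differentiable_pd b (hv b) x

theorem vecDiv_vecCurl (hv : ∀ d, ContDiff ℝ 2 fun y => v y d) (x : Fin 3 → ℝ) :
    vecDiv (vecCurl v) x = 0 := by
  have hessian_symm (d : Fin 3) : (Matrix.of fun a c => pd a (pd c fun y => v y d) x).IsSymm :=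
    Matrix.IsSymm.ext fun a c => pd_comm c a (hv d) x
  calc vecDiv (vecCurl v) x
      = ∑ a, ∑ c, ∑ d, eps a c d * pd a (pd c fun y => v y d) x := by
        simp only [vecDiv, pd_vecCurl hv]
    _ = ∑ d, ∑ a, ∑ c, eps a c d * pd a (pd c fun y => v y d) x := Finset.sum_comm_cycle
    _ = 0 := Finset.sum_eq_zero fun d _ => by
        simpa only [eps_rotate d, Matrix.of_apply] using
          isSymm_iff_sum_eps_mul_eq_zero.mp (hessian_symm d) d

theorem vecCurl_vecCurl (hv : ∀ d, ContDiff ℝ 2 fun y => v y d) (x : Fin 3 → ℝ) (a : Fin 3) :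
    vecCurl (vecCurl v) x a = pd a (vecDiv v) x - ∑ c, pd c (pd c fun y => v y a) x := by
  calc vecCurl (vecCurl v) x a
      = ∑ c, ∑ k, eps a c k * ∑ e, ∑ d, eps k e d * pd c (pd e fun y => v y d) x := by
        unfold vecCurl
        simp only [← pd_vecCurl hv]; rfl
    _ = ∑ c, (pd c (pd a fun y => v y c) x - pd c (pd c fun y => v y a) x) :=
        Finset.sum_congr rfl fun c _ =>
          sum_eps_mul_sum_eps_mul a c (Matrix.of fun e d => pd c (pd e fun y => v y d) x)
    _ = pd a (vecDiv v) x - ∑ c, pd c (pd c fun y => v y a) x := by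
        simp only [Finset.sum_sub_distrib, pd_vecDiv hv, pd_comm a _ (hv _)]

end VectorField

section TensorField

open scoped Matrix

/-- Unsymmetrized tensor curl `ε_{acd} ∂_c S_{db}`: the vector curl of each column of `S`. -/
noncomputable def colCurl (S : (Fin 3 → ℝ) → Matrix (Fin 3) (Fin 3) ℝ) (x : Fin 3 → ℝ) :
    Matrix (Fin 3) (Fin 3) ℝ :=
  Matrix.of fun a b => vecCurl (fun y d => S y d b) x a

/-- Transverse trace-free (TT) tensor fields: symmetric, trace-free, with divergence-free rows. -/
structure IsTransverseTracefree (S : (Fin 3 → ℝ) → Matrix (Fin 3) (Fin 3) ℝ) : Prop where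
  isSymm : ∀ x, (S x).IsSymm
  trace_eq_zero : ∀ x, (S x).trace = 0
  vecDiv_eq_zero : ∀ x a, vecDiv (fun y => S y a) x = 0

variable {S : (Fin 3 → ℝ) → Matrix (Fin 3) (Fin 3) ℝ}

theorem curlT_eq_symm_part_colCurl (S : (Fin 3 → ℝ) → Matrix (Fin 3) (Fin 3) ℝ) (x : Fin 3 → ℝ) :
    curlT S x = (1 / 2 : ℝ) • (colCurl S x + (colCurl S x)ᵀ) := by
  ext a b
  simp [curlT, colCurl, vecCurl, Finset.sum_add_distrib]

theorem sum_eps_mul_colCurl (hS : ∀ b, Differentiable ℝ fun y => S y b b) (x : Fin 3 → ℝ)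
    (k : Fin 3) :
    ∑ b, ∑ a, eps k b a * colCurl S x a b =
      pd k (fun y => (S y).trace) x - vecDiv (fun y => S y k) x := by
  have htrace : pd k (fun y => (S y).trace) x = ∑ b, pd k (fun y => S y b b) x :=
    pd_sum k fun b _ => hS b x
  rw [htrace, vecDiv, ← Finset.sum_sub_distrib]
  exact Finset.sum_congr rfl fun b _ =>
    sum_eps_mul_sum_eps_mul k b (Matrix.of fun c d => pd c (fun y => S y d b) x)

theorem trace_colCurl_eq_zero (hS : ∀ x, (S x).IsSymm) (x : Fin 3 → ℝ) :
    (colCurl S x).trace = 0 := by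
  have hpd (c : Fin 3) : (Matrix.of fun d a => pd c (fun y => S y d a) x).IsSymm :=
    Matrix.IsSymm.ext fun d a => by simp only [Matrix.of_apply, (hS _).apply d a]
  calc (colCurl S x).trace
      = ∑ a, ∑ c, ∑ d, eps a c d * pd c (fun y => S y d a) x := rfl
    _ = ∑ c, ∑ d, ∑ a, eps a c d * pd c (fun y => S y d a) x := Finset.sum_comm_cycle.symm
    _ = 0 := Finset.sum_eq_zero fun c _ => by
        simpa only [← eps_rotate _ c, Matrix.of_apply] using
          isSymm_iff_sum_eps_mul_eq_zero.mp (hpd c) c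

theorem colCurl_colCurl (hS : ∀ a b, ContDiff ℝ 2 fun y => S y a b) (x : Fin 3 → ℝ)
    (a b : Fin 3) :
    colCurl (colCurl S) x a b =
      pd a (vecDiv fun y d => S y d b) x - ∑ c, pd c (pd c fun y => S y a b) x :=
  vecCurl_vecCurl (fun d => hS d b) x a

namespace IsTransverseTracefree

theorem isSymm_colCurl (hS : IsTransverseTracefree S)
    (hdiff : ∀ b, Differentiable ℝ fun y => S y b b) (x : Fin 3 → ℝ) :
    (colCurl S x).IsSymm := by
  rw [← Matrix.isSymm_transpose_iff, isSymm_iff_sum_eps_mul_eq_zero]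
  intro k
  simp only [Matrix.transpose_apply, sum_eps_mul_colCurl hdiff, hS.trace_eq_zero, pd_const,
    hS.vecDiv_eq_zero, sub_zero]

theorem curlT_eq_colCurl (hS : IsTransverseTracefree S)
    (hdiff : ∀ b, Differentiable ℝ fun y => S y b b) : curlT S = colCurl S := by
  funext x
  rw [curlT_eq_symm_part_colCurl, (hS.isSymm_colCurl hdiff x).eq, ← two_smul ℝ, smul_smul]
  norm_num

theorem vecDiv_col_eq_zero (hS : IsTransverseTracefree S) (b : Fin 3) :
    (vecDiv fun y d => S y d b) = fun _ => 0 := by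
  funext x
  simpa only [(hS.isSymm _).apply] using hS.vecDiv_eq_zero x b

end IsTransverseTracefree

theorem isTransverseTracefree_colCurl (hS : IsTransverseTracefree S)
    (hsmooth : ∀ a b, ContDiff ℝ 2 fun y => S y a b) :
    IsTransverseTracefree (colCurl S) where
  isSymm := hS.isSymm_colCurl fun b => (hsmooth b b).differentiable two_ne_zero
  trace_eq_zero := trace_colCurl_eq_zero hS.isSymm
  vecDiv_eq_zero x a := by
    have hsymm := hS.isSymm_colCurl fun b => (hsmooth b b).differentiable two_ne_zero
    calc vecDiv (fun y => colCurl S y a) x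
        = vecDiv (vecCurl fun y d => S y d a) x := by
          congr 1; funext y b; exact (hsymm y).apply b a
      _ = 0 := vecDiv_vecCurl (fun d => hsmooth d a) x

end TensorField

theorem curl_curl_of_transverse_tracefree_general
    {S : (Fin 3 → ℝ) → Matrix (Fin 3) (Fin 3) ℝ} (hS : IsTransverseTracefree S)
    (hsmooth : ∀ a b, ContDiff ℝ 2 fun x => S x a b) (x : Fin 3 → ℝ) (a b : Fin 3) :
    curlT (curlT S) x a b = -∑ c, pd c (pd c fun y => S y a b) x := by
  have hdiff (b : Fin 3) : Differentiable ℝ fun y => S y b b :=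
    (hsmooth b b).differentiable two_ne_zero
  have hdiff_curl (b : Fin 3) : Differentiable ℝ fun y => colCurl S y b b :=
    differentiable_vecCurl (fun d => hsmooth d b) b
  calc curlT (curlT S) x a b
      = colCurl (colCurl S) x a b := by
        rw [hS.curlT_eq_colCurl hdiff,
          (isTransverseTracefree_colCurl hS hsmooth).curlT_eq_colCurl hdiff_curl]
    _ = pd a (vecDiv fun y d => S y d b) x - ∑ c, pd c (pd c fun y => S y a b) x :=
        colCurl_colCurl hsmooth x a b
    _ = -∑ c, pd c (pd c fun y => S y a b) x := by
        rw [hS.vecDiv_col_eq_zero, pd_const, zero_sub]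

/-- For a smooth symmetric trace-free divergence-free matrix field `S` on `ℝ³`,
the symmetrized tensor curl applied twice gives minus the Laplacian:
`(curl (curl S))_{ab} = −ΔS_{ab}`. -/
theorem curl_curl_of_transverse_tracefree
    (S : (Fin 3 → ℝ) → Matrix (Fin 3) (Fin 3) ℝ)
    (hSsmooth : ∀ a b, ContDiff ℝ (⊤ : ℕ∞) (fun x => S x a b))
    (hSsymm : ∀ x a b, S x a b = S x b a)
    (hStrace : ∀ x, (∑ a, S x a a) = 0)
    (hSdiv : ∀ x a, (∑ b, pd b (fun y => S y a b) x) = 0) :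
    ∀ x a b, curlT (curlT S) x a b = - ∑ c, pd c (pd c (fun y => S y a b)) x := by
  exact curl_curl_of_transverse_tracefree_general
    ⟨fun x => Matrix.IsSymm.ext fun a b => hSsymm x b a, hStrace, hSdiv⟩
    fun a b => contDiff_infty.mp (hSsmooth a b) 2
end

section
/- Let I ⊆ ℝ be an open interval and let φ, ℰ : I → ℝ be differentiable functions satisfying φ′ = −½φ² − ℰ and ℰ′ = −(3/2)φℰ on I, and suppose K := −ℰ + ¼φ² is strictly positive on I. Then the function s ↦ ℰ(s)·K(s)^{−3/2} is constant on I. -/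
/-!
The Gaussian curvature of the sheets obeys the linear equation `K′ = −φK`. Since `ℰ′ = −(3/2)φℰ`,
the logarithmic derivative of `ℰ` is `3/2` times that of `K`, so the factor `K^(−3/2)` exactly
cancels the growth of `ℰ`.
-/

theorem exists_const_of_hasDerivWithinAt_zero {𝕜 E : Type*} [RCLike 𝕜]
    [NormedAddCommGroup E] [NormedSpace 𝕜 E] {f : 𝕜 → E} {S : Set 𝕜} (hS : Convex ℝ S)
    (hf : ∀ x ∈ S, HasDerivWithinAt f 0 S x) : ∃ c, ∀ x ∈ S, f x = c := by
  obtain rfl | ⟨x₀, hx₀⟩ := S.eq_empty_or_nonempty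
  · simp
  · refine ⟨f x₀, fun x hx => ?_⟩
    have bound : ‖f x - f x₀‖ ≤ 0 * ‖x - x₀‖ :=
      hS.norm_image_sub_le_of_norm_hasDerivWithin_le hf (fun _ _ => norm_zero.le) hx₀ hx
    rwa [zero_mul, norm_le_zero_iff, sub_eq_zero] at bound

theorem hasDerivWithinAt_mul_rpow_zero {f k : ℝ → ℝ} {S : Set ℝ} {a q s : ℝ}
    (hf : HasDerivWithinAt f (-(q * a) * f s) S s) (hk : HasDerivWithinAt k (a * k s) S s)
    (hk₀ : k s ≠ 0) : HasDerivWithinAt (fun x => f x * k x ^ q) 0 S s := by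
  have hpow : HasDerivWithinAt (fun x => k x ^ q) (q * a * k s ^ q) S s := by
    refine (hk.rpow_const (p := q) (Or.inl hk₀)).congr_deriv ?_
    rw [Real.rpow_sub_one hk₀]
    field_simp
  exact (hf.mul hpow).congr_deriv (by ring)

/-- The Gaussian curvature `K = −ℰ + ¼φ²` of the 2-sheets, for sheet expansion `φ` and electric
Weyl scalar `ℰ`, as a function of proper radial distance. -/
noncomputable def sheetCurvature (φ ℰ : ℝ → ℝ) (s : ℝ) : ℝ :=
  -ℰ s + (1 / 4) * (φ s) ^ 2

theorem hasDerivWithinAt_sheetCurvature {φ ℰ : ℝ → ℝ} {I : Set ℝ} {s : ℝ}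
    (hφ : HasDerivWithinAt φ (-(1 / 2) * (φ s) ^ 2 - ℰ s) I s)
    (hℰ : HasDerivWithinAt ℰ (-(3 / 2) * φ s * ℰ s) I s) :
    HasDerivWithinAt (sheetCurvature φ ℰ) (-φ s * sheetCurvature φ ℰ s) I s := by
  refine (hℰ.neg.add ((hφ.pow 2).const_mul (1 / 4))).congr_deriv ?_
  rw [sheetCurvature]
  push_cast
  ring

theorem weyl_curvature_first_integral_general {I : Set ℝ} (hI : I.OrdConnected) {φ ℰ : ℝ → ℝ}
    (hφ : ∀ s ∈ I, HasDerivWithinAt φ (-(1 / 2) * (φ s) ^ 2 - ℰ s) I s)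
    (hℰ : ∀ s ∈ I, HasDerivWithinAt ℰ (-(3 / 2) * φ s * ℰ s) I s)
    (hK : ∀ s ∈ I, 0 < sheetCurvature φ ℰ s) :
    ∃ c : ℝ, ∀ s ∈ I, ℰ s * sheetCurvature φ ℰ s ^ (-(3 : ℝ) / 2) = c := by
  refine exists_const_of_hasDerivWithinAt_zero hI.convex fun s hs => ?_
  have hK' : HasDerivWithinAt (sheetCurvature φ ℰ) (-φ s * sheetCurvature φ ℰ s) I s :=
    hasDerivWithinAt_sheetCurvature (hφ s hs) (hℰ s hs)
  have hℰ' : HasDerivWithinAt ℰ (-(-(3 : ℝ) / 2 * -φ s) * ℰ s) I s :=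
    (hℰ s hs).congr_deriv (by ring)
  exact hasDerivWithinAt_mul_rpow_zero hℰ' hK' (hK s hs).ne'

/-- If on an open interval `I` the functions `φ, ℰ` satisfy `φ′ = −½φ² − ℰ` and
`ℰ′ = −(3/2)φℰ`, and the Gaussian curvature `K = −ℰ + ¼φ²` is strictly positive
on `I`, then `ℰ·K^{−3/2}` is constant on `I`. -/
theorem weyl_curvature_first_integral
    (I : Set ℝ) (hIopen : IsOpen I) (hIinterval : I.OrdConnected)
    (φ ℰ : ℝ → ℝ)
    (hφ : ∀ s ∈ I, HasDerivAt φ (-(1 / 2) * (φ s) ^ 2 - ℰ s) s)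
    (hℰ : ∀ s ∈ I, HasDerivAt ℰ (-(3 / 2) * φ s * ℰ s) s)
    (hK : ∀ s ∈ I, 0 < -ℰ s + (1 / 4) * (φ s) ^ 2) :
    ∃ c : ℝ, ∀ s ∈ I,
      ℰ s * (-ℰ s + (1 / 4) * (φ s) ^ 2) ^ (-(3 : ℝ) / 2) = c :=
  weyl_curvature_first_integral_general hIinterval
    (fun s hs => (hφ s hs).hasDerivWithinAt) (fun s hs => (hℰ s hs).hasDerivWithinAt) hK
end
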